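/- For every positive integer n and all integers j, k with 1 ≤ j ≤ k and 2k ≤ n, one has j(n−j)·C(2n+2, 2j+1) ≤ k(n−k)·C(2n+2, 2k+1); that is, the sequence k ↦ k(n−k)·C(2n+2, 2k+1) is weakly increasing for 1 ≤ k ≤ n/2. (The monotonicity claim proved in Corollary 4.2.) -/

import Mathlib

/-!
Both factors `k * (n - k)` and `C(2n+2, 2k+1)` are symmetric under `k ↦ n - k` and increase towards
the centre `k = n / 2`. Hence each of them grows from `j` to `k` as soon as `k` lies between `j` and
its mirror image `n - j`.
-/

section OrderedSemiring

variable {R : Type*} [CommSemiring R] [PartialOrder R] [ExistsAddOfLE R] [MulPosMono R]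
  [AddLeftMono R] [AddLeftReflectLE R] {a b c d : R}

theorem mul_le_mul_of_add_eq_add (hab : a ≤ b) (hac : a ≤ c) (hsum : a + d = b + c) :
    a * d ≤ b * c := by
  refine le_of_add_le_add_left (a := a * a) ?_
  calc a * a + a * d = a * (a + d) := (mul_add a a d).symm
    _ = a * c + b * a := by rw [hsum]; ring
    _ ≤ a * a + b * c := mul_add_mul_le_mul_add_mul hab hac

end OrderedSemiring

theorem choose_monotoneOn_Iic_half (m : ℕ) : MonotoneOn m.choose (Set.Iic (m / 2)) :=
  monotoneOn_of_le_add_one Set.ordConnected_Iic fun _ _ _ hr ↦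
    Nat.choose_le_succ_of_lt_half_left hr

theorem choose_le_choose_of_add_le {m a b : ℕ} (hab : a ≤ b) (hsum : a + b ≤ m) :
    m.choose a ≤ m.choose b := by
  have ha : a ≤ m / 2 := by lia
  rcases le_or_gt b (m / 2) with hb | hb
  · exact choose_monotoneOn_Iic_half m ha hb hab
  · have hb' : m - b ≤ m / 2 := by lia
    rw [← Nat.choose_symm (show b ≤ m by lia)]
    exact choose_monotoneOn_Iic_half m ha hb' (by lia)

theorem coeff_sequence_monotone_general {n j k : ℕ} (hjk : j ≤ k) (hsum : j + k ≤ n) :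
    j * (n - j) * (2 * n + 2).choose (2 * j + 1)
      ≤ k * (n - k) * (2 * n + 2).choose (2 * k + 1) := by
  have hmul : j * (n - j) ≤ k * (n - k) := mul_le_mul_of_add_eq_add hjk (by lia) (by lia)
  have hchoose : (2 * n + 2).choose (2 * j + 1) ≤ (2 * n + 2).choose (2 * k + 1) :=
    choose_le_choose_of_add_le (by lia) (by lia)
  exact Nat.mul_le_mul hmul hchoose

/-- The monotonicity claim proved in Corollary 4.2: the sequence
`k ↦ k(n-k)·C(2n+2, 2k+1)` is weakly increasing for `1 ≤ k ≤ n/2`. -/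
theorem coeff_sequence_monotone (n j k : ℕ) (hn : 1 ≤ n)
    (hj : 1 ≤ j) (hjk : j ≤ k) (hk : 2 * k ≤ n) :
    j * (n - j) * (2 * n + 2).choose (2 * j + 1)
      ≤ k * (n - k) * (2 * n + 2).choose (2 * k + 1) :=
  coeff_sequence_monotone_general hjk (by lia)
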